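/- arXiv:2412.10936 — 2 statements merged into one kernel-verified Lean document; each statement's English description precedes it below -/
import Mathlib

section
/- Let K be an algebraically closed field of characteristic zero and let n be a positive integer. Then every n×n matrix M over K with determinant 1 is a product M = S₁ · S₂ of two diagonalizable matrices S₁, S₂ each of determinant 1. -/
/-- A square matrix is diagonalizable (semisimple) if it is conjugate to a diagonal matrix. -/
def Matrix.IsDiagonalizable {n : ℕ} {K : Type*} [Field K]
    (M : Matrix (Fin n) (Fin n) K) : Prop :=
  ∃ P : (Matrix (Fin n) (Fin n) K)ˣ, ∃ d : Fin n → K,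
    M = (P : Matrix (Fin n) (Fin n) K) * Matrix.diagonal d *
      ((P⁻¹ : (Matrix (Fin n) (Fin n) K)ˣ) : Matrix (Fin n) (Fin n) K)

open Module
open scoped Matrix

namespace Matrix

variable {K : Type*} [Field K] {n : ℕ}

theorem IsDiagonalizable.conj {M : Matrix (Fin n) (Fin n) K} (hM : M.IsDiagonalizable)
    (Q : (Matrix (Fin n) (Fin n) K)ˣ) :
    (Q.val * M * (Q⁻¹).val).IsDiagonalizable := by
  obtain ⟨P, d, rfl⟩ := hM
  exact ⟨Q * P, d, by simp [mul_assoc]⟩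

theorem isDiagonalizable_diagonal (d : Fin n → K) : (diagonal d).IsDiagonalizable :=
  ⟨1, d, by simp⟩

theorem isDiagonalizable_of_injective_of_hasEigenvalue {M : Matrix (Fin n) (Fin n) K}
    {e : Fin n → K} (he : Function.Injective e)
    (hM : ∀ i, End.HasEigenvalue (toLin' M) (e i)) : M.IsDiagonalizable := by
  choose v hv using fun i => (hM i).exists_hasEigenvector
  have hli := End.eigenvectors_linearIndependent' (toLin' M) e he v hv
  have hunit : IsUnit (of v)ᵀ := linearIndependent_cols_iff_isUnit.mp hli
  refine ⟨hunit.unit, e, ?_⟩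
  rw [Units.eq_mul_inv_iff_mul_eq]
  ext i j
  have := congrFun (hv j).apply_eq_smul i
  rw [IsUnit.unit_spec, mul_diagonal, transpose_apply, of_apply, mul_comm (v j i)]
  simpa [mulVec, dotProduct, mul_apply] using this

theorem IsLowerTriangular.isDiagonalizable {M : Matrix (Fin n) (Fin n) K}
    (hM : M.IsLowerTriangular) (hd : Function.Injective fun i => M i i) :
    M.IsDiagonalizable := by
  refine isDiagonalizable_of_injective_of_hasEigenvalue hd fun i => ?_
  have hMt : Mᵀ.IsUpperTriangular := hM.transpose
  rw [End.hasEigenvalue_iff_isRoot_charpoly, charpoly_toLin', ← charpoly_transpose,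
    charpoly_of_isUpperTriangular Mᵀ hMt, Polynomial.IsRoot.def, Polynomial.eval_prod]
  exact Finset.prod_eq_zero (Finset.mem_univ i) (by simp)

end Matrix

/-- Every endomorphism of a finite-dimensional vector space over an algebraically closed field
is triangularizable. -/
theorem Module.End.exists_basis_isLowerTriangular_toMatrix {K : Type*} [Field K] [IsAlgClosed K]
    {n : ℕ} {V : Type*} [AddCommGroup V] [Module K V] [FiniteDimensional K V]
    (hV : finrank K V = n) (f : End K V) :
    ∃ b : Basis (Fin n) K V, (LinearMap.toMatrix b b f).IsLowerTriangular := by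
  induction n generalizing V with
  | zero => exact ⟨finBasisOfFinrankEq K V hV, fun i => i.elim0⟩
  | succ n ih =>
    have : Nontrivial V := nontrivial_of_finrank_pos (R := K) (by omega)
    obtain ⟨μ, hμ⟩ := f.exists_eigenvalue
    have hrange : LinearMap.range (f - algebraMap K (End K V) μ) < ⊤ := by
      refine lt_top_iff_ne_top.mpr fun h => hμ ?_
      change f.eigenspace μ = ⊥
      rw [End.eigenspace_def]
      exact LinearMap.ker_eq_bot_iff_range_eq_top.mpr h
    -- a hyperplane containing the range of `f - μ` is `f`-invariant
    obtain ⟨φ, hφ, hle⟩ := Submodule.exists_le_ker_of_lt_top _ hrange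
    have hinv : ∀ x ∈ LinearMap.ker φ, f x ∈ LinearMap.ker φ := fun x hx => by
      have := add_mem (hle (LinearMap.mem_range_self _ x)) (Submodule.smul_mem _ μ hx)
      simpa [Module.algebraMap_end_apply] using this
    obtain ⟨b, hb⟩ := ih (V := LinearMap.ker φ)
      (by have := Dual.finrank_ker_add_one_of_ne_zero hφ; omega) (f.restrict hinv)
    obtain ⟨y, hy⟩ := LinearMap.surjective hφ 1
    let c : Basis (Fin (n + 1)) K V := Basis.mkFinCons y b
      (fun a x hx h => by simpa [hy, LinearMap.mem_ker.mp hx] using congrArg φ h)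
      (fun z => ⟨-φ z, by simp [hy]⟩)
    have hc : ∀ i, (b i : V) = c i.succ := fun i => by simp [c]
    refine ⟨c, fun i j hij => ?_⟩
    replace hij : i < j := hij
    obtain ⟨k, rfl⟩ := Fin.exists_succ_eq.mpr (Fin.ne_zero_of_lt hij)
    have hsum : f (c k.succ) = ∑ l, LinearMap.toMatrix b b (f.restrict hinv) l k • c l.succ := by
      have := congrArg Subtype.val (b.sum_repr (f.restrict hinv (b k)))
      simp only [LinearMap.toMatrix_apply, ← hc]
      rw [← LinearMap.coe_restrict_apply hinv, ← this]
      simp only [Submodule.coe_sum, Submodule.coe_smul]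
    rw [LinearMap.toMatrix_apply, hsum]
    simp only [map_sum, map_smul, Basis.repr_self, Finsupp.coe_finsetSum, Finset.sum_apply,
      Finsupp.smul_apply, smul_eq_mul]
    refine Finset.sum_eq_zero fun l _ => ?_
    obtain rfl | hl := eq_or_ne l.succ i
    · rw [hb (Fin.succ_lt_succ_iff.mp hij : l < k), zero_mul]
    · rw [Finsupp.single_eq_of_ne hl.symm, mul_zero]

theorem Matrix.exists_conj_isLowerTriangular {K : Type*} [Field K] [IsAlgClosed K] {n : ℕ}
    (M : Matrix (Fin n) (Fin n) K) :
    ∃ P : (Matrix (Fin n) (Fin n) K)ˣ, ∃ T : Matrix (Fin n) (Fin n) K,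
      T.IsLowerTriangular ∧ M = P.val * T * (P⁻¹).val := by
  obtain ⟨b, hb⟩ := End.exists_basis_isLowerTriangular_toMatrix (finrank_fin_fun K) (toLin' M)
  have hunit : IsUnit (of b)ᵀ := linearIndependent_cols_iff_isUnit.mp b.linearIndependent
  refine ⟨hunit.unit, _, hb, ?_⟩
  rw [Units.eq_mul_inv_iff_mul_eq]
  ext i j
  have := congrFun (b.sum_repr (toLin' M (b j))) i
  simp only [Finset.sum_apply, Pi.smul_apply, smul_eq_mul] at this
  simp only [IsUnit.unit_spec, mul_apply, LinearMap.toMatrix_apply, transpose_apply, of_apply,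
    mul_comm (b _ i), this]
  simp [mulVec, dotProduct]

theorem IsAlgClosed.exists_injective_prod_eq_one (K : Type*) [Field K] [IsAlgClosed K]
    [CharZero K] {n : ℕ} (hn : 0 < n) :
    ∃ e : Fin n → K, Function.Injective e ∧ ∏ i, e i = 1 := by
  obtain ⟨c, hc⟩ := IsAlgClosed.exists_pow_nat_eq ((n.factorial : K)⁻¹) hn
  have hfac : (n.factorial : K) ≠ 0 := Nat.cast_ne_zero.mpr n.factorial_ne_zero
  have hc0 : c ≠ 0 := by
    rintro rfl
    rw [zero_pow hn.ne'] at hc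
    exact inv_ne_zero hfac hc.symm
  refine ⟨fun i => c * ((i + 1 : ℕ) : K), fun i j hij => ?_, ?_⟩
  · have := Nat.cast_injective (mul_left_cancel₀ hc0 hij)
    exact Fin.ext (by omega)
  · rw [Finset.prod_mul_distrib, Finset.prod_const, Finset.card_univ, Fintype.card_fin, hc,
      ← Nat.cast_prod, Fin.prod_univ_eq_prod_range (fun i => i + 1),
      Finset.prod_range_add_one_eq_factorial, inv_mul_cancel₀ hfac]

/-- Every matrix of determinant 1 over an algebraically closed field of characteristic zero
is a product of two diagonalizable matrices of determinant 1. -/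
theorem stmt1 (K : Type*) [Field K] [IsAlgClosed K] [CharZero K] (n : ℕ) (hn : 0 < n)
    (M : Matrix (Fin n) (Fin n) K) (hM : M.det = 1) :
    ∃ S₁ S₂ : Matrix (Fin n) (Fin n) K,
      Matrix.IsDiagonalizable S₁ ∧ Matrix.IsDiagonalizable S₂ ∧
      S₁.det = 1 ∧ S₂.det = 1 ∧ M = S₁ * S₂ := by
  obtain ⟨P, T, hT, rfl⟩ := Matrix.exists_conj_isLowerTriangular M
  obtain ⟨e, he, he1⟩ := IsAlgClosed.exists_injective_prod_eq_one K hn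
  have hT1 : T.det = 1 := by rwa [Matrix.det_units_conj] at hM
  have hdiag : ∏ i, T i i = 1 := by rw [← Matrix.det_of_isLowerTriangular T hT, hT1]
  have ht : ∀ i, T i i ≠ 0 := fun i =>
    Finset.prod_ne_zero_iff.mp (hdiag.trans_ne one_ne_zero) i (Finset.mem_univ i)
  have he0 : ∀ i, e i ≠ 0 := fun i =>
    Finset.prod_ne_zero_iff.mp (he1.trans_ne one_ne_zero) i (Finset.mem_univ i)
  -- rescale the columns of `T` so that its diagonal becomes `e`
  let D : Matrix (Fin n) (Fin n) K := Matrix.diagonal fun i => e i / T i i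
  let D' : Matrix (Fin n) (Fin n) K := Matrix.diagonal fun i => T i i / e i
  have hDD' : D * D' = 1 := by
    rw [Matrix.diagonal_mul_diagonal, ← Matrix.diagonal_one]
    congr 1
    ext i
    field_simp [ht i, he0 i]
  have hTD : (T * D).IsDiagonalizable := by
    refine Matrix.IsLowerTriangular.isDiagonalizable
      (hT.mul (Matrix.blockTriangular_diagonal _)) ?_
    convert he using 2 with i
    rw [Matrix.mul_diagonal, mul_div_cancel₀ _ (ht i)]
  refine ⟨P.val * (T * D) * (P⁻¹).val, P.val * D' * (P⁻¹).val, hTD.conj P,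
    (Matrix.isDiagonalizable_diagonal _).conj P, ?_, ?_, ?_⟩
  · rw [Matrix.det_units_conj, Matrix.det_mul, hT1, Matrix.det_diagonal, Finset.prod_div_distrib,
      he1, hdiag, div_one, one_mul]
  · rw [Matrix.det_units_conj, Matrix.det_diagonal, Finset.prod_div_distrib, he1, hdiag, div_one]
  · simp only [mul_assoc, Units.inv_mul_cancel_left]
    rw [← mul_assoc D, hDD', one_mul]
end

section
/- Let K be an algebraically closed field of characteristic zero and let g be a finite-dimensional Lie algebra over K. Let r be a Lie subalgebra of g and n a Lie ideal of g such that g = r ⊕ n as vector spaces and such that n, regarded as an r-module via the adjoint action, is a sum of irreducible r-submodules. Let n₁ denote the sum of all irreducible r-submodules of n on which r acts nontrivially, and let s be the Lie subalgebra of n generated by n₁. Then r ⊕ s is the minimal Lie ideal of g containing r: r ⊕ s is a Lie ideal of g, and every Lie ideal of g that contains r contains r ⊕ s. -/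
section Defs

variable (K : Type*) [Field K] (g : Type*) [LieRing g] [LieAlgebra K g]
  (r : LieSubalgebra K g)

/-- A subspace of `g` stable under the adjoint action of the subalgebra `r`. -/
def IsAdSubmodule (V : Submodule K g) : Prop :=
  ∀ x ∈ r, ∀ v ∈ V, ⁅x, v⁆ ∈ V

/-- An irreducible `r`-submodule of `g` under the adjoint action. -/
def IsIrreducibleAdSubmodule (V : Submodule K g) : Prop :=
  IsAdSubmodule K g r V ∧ V ≠ ⊥ ∧
    ∀ W : Submodule K g, W ≤ V → IsAdSubmodule K g r W → W = ⊥ ∨ W = V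

/-- The adjoint action of `r` on `V` is nontrivial. -/
def HasNontrivialAdAction (V : Submodule K g) : Prop :=
  ∃ x ∈ r, ∃ v ∈ V, ⁅x, v⁆ ≠ 0

/-- `n₁`: the sum of all irreducible `r`-submodules of `n` with nontrivial `r`-action. -/
def adNontrivPart (n : Submodule K g) : Submodule K g :=
  sSup {V : Submodule K g | V ≤ n ∧ IsIrreducibleAdSubmodule K g r V ∧
    HasNontrivialAdAction K g r V}

/-- `s`: the Lie subalgebra generated by `n₁`. -/
def adNontrivSubalgebra (n : Submodule K g) : LieSubalgebra K g :=
  LieSubalgebra.lieSpan K g (adNontrivPart K g r n : Set g)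

end Defs

section Helpers

variable {K : Type*} [Field K] {g : Type*} [LieRing g] [LieAlgebra K g]
  {r : LieSubalgebra K g}

/-- A nontrivial irreducible `r`-submodule `V` is spanned by the brackets `⁅x, v⁆` with `x ∈ r`
and `v ∈ V`. -/
theorem IsIrreducibleAdSubmodule.span_lie_eq {V : Submodule K g}
    (hV : IsIrreducibleAdSubmodule K g r V) (hnt : HasNontrivialAdAction K g r V) :
    Submodule.span K {z | ∃ x ∈ r, ∃ v ∈ V, ⁅x, v⁆ = z} = V := by
  have hle : Submodule.span K {z | ∃ x ∈ r, ∃ v ∈ V, ⁅x, v⁆ = z} ≤ V := by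
    rw [Submodule.span_le]
    rintro _ ⟨x, hx, v, hv, rfl⟩
    exact hV.1 x hx v hv
  refine (hV.2.2 _ hle fun x hx v hv => ?_).resolve_left fun hbot => ?_
  · exact Submodule.subset_span ⟨x, hx, v, hle hv, rfl⟩
  · obtain ⟨x, hx, v, hv, hne⟩ := hnt
    have hmem : ⁅x, v⁆ ∈ Submodule.span K {z | ∃ x ∈ r, ∃ v ∈ V, ⁅x, v⁆ = z} :=
      Submodule.subset_span ⟨x, hx, v, hv, rfl⟩
    rw [hbot, Submodule.mem_bot] at hmem
    exact hne hmem

theorem le_adNontrivPart {n V : Submodule K g} (hVn : V ≤ n)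
    (hV : IsIrreducibleAdSubmodule K g r V) (hnt : HasNontrivialAdAction K g r V) :
    V ≤ adNontrivPart K g r n :=
  le_sSup ⟨hVn, hV, hnt⟩

theorem adNontrivPart_le_span_lie (n : Submodule K g) :
    adNontrivPart K g r n ≤ Submodule.span K {z | ∃ x ∈ r, ∃ v ∈ n, ⁅x, v⁆ = z} := by
  refine sSup_le ?_
  rintro V ⟨hVn, hV, hnt⟩
  rw [← hV.span_lie_eq hnt]
  refine Submodule.span_mono ?_
  rintro _ ⟨x, hx, v, hv, rfl⟩
  exact ⟨x, hx, v, hVn hv, rfl⟩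

/-- A sum of irreducible `r`-submodules is the sum of its nontrivial part and its
`r`-invariants. -/
theorem exists_add_of_mem_of_eq_sSup {n : Submodule K g}
    (hn : n = sSup {V : Submodule K g | V ≤ n ∧ IsIrreducibleAdSubmodule K g r V})
    {v : g} (hv : v ∈ n) :
    ∃ a ∈ adNontrivPart K g r n, ∃ b ∈ n, (∀ x ∈ r, ⁅x, b⁆ = 0) ∧ a + b = v := by
  rw [hn, sSup_eq_iSup'] at hv
  induction hv using Submodule.iSup_induction' with
  | mem V w hw =>
    obtain ⟨V, hVn, hV⟩ := V
    by_cases hnt : HasNontrivialAdAction K g r V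
    · exact ⟨w, le_adNontrivPart hVn hV hnt hw, 0, n.zero_mem, by simp, by simp⟩
    · refine ⟨0, Submodule.zero_mem _, w, hVn hw, fun x hx => ?_, by simp⟩
      by_contra hne
      exact hnt ⟨x, hx, w, hw, hne⟩
  | zero => exact ⟨0, Submodule.zero_mem _, 0, n.zero_mem, by simp, by simp⟩
  | add v w _ _ hv hw =>
    obtain ⟨a, ha, b, hb, hrb, rfl⟩ := hv
    obtain ⟨c, hc, d, hd, hrd, rfl⟩ := hw
    refine ⟨a + c, add_mem ha hc, b + d, add_mem hb hd, fun x hx => ?_, by abel⟩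
    rw [lie_add, hrb x hx, hrd x hx, add_zero]

theorem adNontrivPart_isAdSubmodule (n : Submodule K g) :
    IsAdSubmodule K g r (adNontrivPart K g r n) := by
  intro x hx v hv
  have hle : adNontrivPart K g r n ≤
      (adNontrivPart K g r n).comap (LieAlgebra.ad K g x : g →ₗ[K] g) :=
    sSup_le fun V hV w hw => le_adNontrivPart hV.1 hV.2.1 hV.2.2 (hV.2.1.1 x hx w hw)
  exact hle hv

theorem lie_mem_adNontrivPart {n : Submodule K g}
    (hn : n = sSup {V : Submodule K g | V ≤ n ∧ IsIrreducibleAdSubmodule K g r V})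
    {x v : g} (hx : x ∈ r) (hv : v ∈ n) : ⁅x, v⁆ ∈ adNontrivPart K g r n := by
  obtain ⟨a, ha, b, -, hrb, rfl⟩ := exists_add_of_mem_of_eq_sSup hn hv
  rw [lie_add, hrb x hx, add_zero]
  exact adNontrivPart_isAdSubmodule n x hx a ha

/-- Elements of the ideal `n` commuting with `r` preserve the nontrivial part of `n`. -/
theorem lie_mem_adNontrivPart_of_commute {n : LieIdeal K g}
    (hn : n.toSubmodule =
      sSup {V : Submodule K g | V ≤ n.toSubmodule ∧ IsIrreducibleAdSubmodule K g r V})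
    {b v : g} (hb : ∀ x ∈ r, ⁅x, b⁆ = 0) (hv : v ∈ adNontrivPart K g r n.toSubmodule) :
    ⁅b, v⁆ ∈ adNontrivPart K g r n.toSubmodule := by
  have hle : Submodule.span K {z | ∃ x ∈ r, ∃ v ∈ n.toSubmodule, ⁅x, v⁆ = z} ≤
      (adNontrivPart K g r n.toSubmodule).comap (LieAlgebra.ad K g b : g →ₗ[K] g) := by
    rw [Submodule.span_le]
    rintro _ ⟨x, hx, w, hw, rfl⟩
    have hbx : ⁅b, x⁆ = 0 := by rw [← lie_skew, hb x hx, neg_zero]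
    change ⁅b, ⁅x, w⁆⁆ ∈ adNontrivPart K g r n.toSubmodule
    rw [leibniz_lie, hbx, zero_lie, zero_add]
    exact lie_mem_adNontrivPart hn hx (lie_mem_right K g n b w hw)
  exact hle (adNontrivPart_le_span_lie _ hv)

/-- If `ad x` maps a set into the subalgebra it generates, then it preserves that subalgebra. -/
theorem lie_mem_lieSpan_of_forall_mem {S : Set g} {x y : g}
    (hx : ∀ z ∈ S, ⁅x, z⁆ ∈ LieSubalgebra.lieSpan K g S)
    (hy : y ∈ LieSubalgebra.lieSpan K g S) : ⁅x, y⁆ ∈ LieSubalgebra.lieSpan K g S := by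
  induction hy using LieSubalgebra.lieSpan_induction with
  | mem z hz => exact hx z hz
  | zero => simp
  | add y z _ _ hy hz => rw [lie_add]; exact add_mem hy hz
  | smul c y _ hy => rw [lie_smul]; exact SMulMemClass.smul_mem c hy
  | lie y z hy' hz' hy hz =>
    rw [leibniz_lie]
    exact add_mem (LieSubalgebra.lie_mem _ hy hz') (LieSubalgebra.lie_mem _ hy' hz)

end Helpers

/-- Lemma 5: if `g = r ⊕ n` with `n` a completely reducible `r`-module under the adjoint
action, then `r ⊕ s` is the minimal Lie ideal of `g` containing `r`, where `s` is the
subalgebra generated by the sum `n₁` of all nontrivial irreducible `r`-submodules of `n`. -/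
theorem stmt14 (K : Type*) [Field K] [IsAlgClosed K] [CharZero K]
    (g : Type*) [LieRing g] [LieAlgebra K g] [Module.Finite K g]
    (r : LieSubalgebra K g) (n : LieIdeal K g)
    (hsup : r.toSubmodule ⊔ n.toSubmodule = ⊤)
    (hinf : r.toSubmodule ⊓ n.toSubmodule = ⊥)
    (hsemisimple : n.toSubmodule =
      sSup {V : Submodule K g | V ≤ n.toSubmodule ∧ IsIrreducibleAdSubmodule K g r V}) :
    (∀ x : g, ∀ y ∈ r.toSubmodule ⊔ (adNontrivSubalgebra K g r n.toSubmodule).toSubmodule,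
      ⁅x, y⁆ ∈ r.toSubmodule ⊔ (adNontrivSubalgebra K g r n.toSubmodule).toSubmodule) ∧
    (∀ i : LieIdeal K g, (∀ x ∈ r, x ∈ i) →
      ∀ y ∈ r.toSubmodule ⊔ (adNontrivSubalgebra K g r n.toSubmodule).toSubmodule,
        y ∈ i) := by
  have hsub : adNontrivPart K g r n.toSubmodule ≤
      (adNontrivSubalgebra K g r n.toSubmodule).toSubmodule :=
    LieSubalgebra.subset_lieSpan
  refine ⟨fun x y hy => ?_, fun i hi y hy => ?_⟩
  · obtain ⟨c, hc, v, hv, rfl⟩ := Submodule.mem_sup.1 (hsup ▸ Submodule.mem_top : x ∈ _)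
    obtain ⟨p, hp, q, hq, rfl⟩ := Submodule.mem_sup.1 hy
    have hcvp : ⁅c + v, p⁆ ∈
        r.toSubmodule ⊔ (adNontrivSubalgebra K g r n.toSubmodule).toSubmodule := by
      rw [add_lie, ← lie_skew v p]
      exact Submodule.add_mem_sup (r.lie_mem hc hp)
        (neg_mem (hsub (lie_mem_adNontrivPart hsemisimple hp hv)))
    rw [lie_add]
    refine add_mem hcvp (Submodule.mem_sup_right ?_)
    refine lie_mem_lieSpan_of_forall_mem (fun z hz => ?_) hq
    obtain ⟨a, ha, b, -, hrb, rfl⟩ := exists_add_of_mem_of_eq_sSup hsemisimple hv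
    rw [add_lie, add_lie]
    exact add_mem (hsub (adNontrivPart_isAdSubmodule _ c hc z hz))
      (add_mem (LieSubalgebra.lie_mem _ (hsub ha) (hsub hz))
        (hsub (lie_mem_adNontrivPart_of_commute hsemisimple hrb hz)))
  · have hspan : Submodule.span K {z | ∃ x ∈ r, ∃ v ∈ n.toSubmodule, ⁅x, v⁆ = z} ≤
        i.toSubmodule := by
      rw [Submodule.span_le]
      rintro _ ⟨x, hx, v, -, rfl⟩
      exact lie_mem_left K g i x v (hi x hx)
    have hs : adNontrivSubalgebra K g r n.toSubmodule ≤ LieIdeal.toLieSubalgebra K g i :=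
      LieSubalgebra.lieSpan_le.2 ((adNontrivPart_le_span_lie _).trans hspan)
    exact (sup_le hi hs : r.toSubmodule ⊔ _ ≤ i.toSubmodule) hy
end
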